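/- Let w be a weight on ℕ. Then both −|w| and |w| belong to spec(A_w), but neither is an eigenvalue of A_w: if ξ ∈ 𝔥 satisfies A_w ξ = |w| • ξ or A_w ξ = −|w| • ξ, then ξ = 0. -/

import Mathlib

noncomputable section

/-- The Hilbert space `𝔥 = ℓ²(Γ)` with `Γ = Finset ℕ`. -/
abbrev H : Type := lp (fun _ : Finset ℕ => ℂ) 2

/-- The canonical orthonormal basis vector `Z_σ`. -/
noncomputable def Z (σ : Finset ℕ) : H := lp.single 2 σ (1 : ℂ)


open Filter Topology

theorem Z_apply (σ τ : Finset ℕ) : (Z σ : H) τ = if τ = σ then 1 else 0 := by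
  unfold Z
  rw [lp.single_apply]
  by_cases h : τ = σ
  · subst h; simp
  · simp [h]

theorem symm_flip_flip (τ : Finset ℕ) (k : ℕ) : symmDiff (symmDiff τ {k}) {k} = τ := by
  simp [symmDiff_assoc]

theorem Xi_apply (X : H →L[ℂ] H) (k : ℕ) (hX : ∀ σ, X (Z σ) = Z (symmDiff σ {k}))
    (ξ : H) (τ : Finset ℕ) : X ξ τ = ξ (symmDiff τ {k}) := by
  have h1 : HasSum (fun σ => lp.single 2 σ (ξ σ)) ξ := lp.hasSum_single (by norm_num) ξ
  have h2 := h1.mapL X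
  have h3 := h2.mapL (lp.evalCLM ℂ (fun _ : Finset ℕ => ℂ) 2 τ)
  have h4 : ∀ σ, lp.evalCLM ℂ (fun _ : Finset ℕ => ℂ) 2 τ (X (lp.single 2 σ (ξ σ)))
      = if σ = symmDiff τ {k} then ξ (symmDiff τ {k}) else 0 := by
    intro σ
    have e : (lp.single 2 σ (ξ σ) : H) = ξ σ • Z σ := by
      unfold Z
      rw [← lp.single_smul]; simp
    rw [e, map_smul, hX, map_smul]
    change ξ σ • (Z (symmDiff σ {k}) : H) τ = _
    rw [Z_apply]
    by_cases h : σ = symmDiff τ {k}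
    · subst h; simp [symm_flip_flip]
    · have : τ ≠ symmDiff σ {k} := by
        rintro rfl; exact h (symm_flip_flip _ _).symm
      simp [h, this]
  simp only [h4] at h3
  exact h3.unique (hasSum_ite_eq _ _)

theorem Xi_norm (X : H →L[ℂ] H) (k : ℕ) (hX : ∀ σ, X (Z σ) = Z (symmDiff σ {k}))
    (ξ : H) : ‖X ξ‖ = ‖ξ‖ := by
  have hp : 0 < (2 : ENNReal).toReal := by norm_num
  rw [lp.norm_eq_tsum_rpow hp, lp.norm_eq_tsum_rpow hp]
  congr 1
  simp only [Xi_apply X k hX]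
  let e : Finset ℕ ≃ Finset ℕ :=
    ⟨fun τ => symmDiff τ {k}, fun τ => symmDiff τ {k}, fun τ => symm_flip_flip τ k,
      fun τ => symm_flip_flip τ k⟩
  exact e.tsum_eq (fun τ => ‖ξ τ‖ ^ (2 : ENNReal).toReal)

theorem A_hasSum (w : ℕ → ℝ) (hw_pos : ∀ k, 0 < w k) (hw_sum : Summable w)
    (Xi : ℕ → H →L[ℂ] H)
    (hXi : ∀ k σ, Xi k (Z σ) = Z (symmDiff σ {k}))
    (A : H →L[ℂ] H) (hA : A = ∑' k, (w k : ℂ) • Xi k) (ε : ℂ) (ξ : H) :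
    HasSum (fun k => (w k : ℂ) • (Xi k ξ - ε • ξ)) (A ξ - (ε * ((∑' k, w k : ℝ) : ℂ)) • ξ) := by
  have hs : Summable (fun k => (w k : ℂ) • Xi k) := by
    refine Summable.of_norm_bounded hw_sum (fun k => ?_)
    rw [norm_smul, Complex.norm_real, Real.norm_of_nonneg (hw_pos k).le]
    have : ‖Xi k‖ ≤ 1 := ContinuousLinearMap.opNorm_le_bound _ zero_le_one
      (fun ξ => by rw [Xi_norm _ k (hXi k), one_mul])
    nlinarith [hw_pos k]
  have h1 : HasSum (fun k => (w k : ℂ) • Xi k) A := hA ▸ hs.hasSum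
  have h2 := h1.mapL (ContinuousLinearMap.apply ℂ H ξ)
  have h3 : HasSum (fun k => (w k : ℂ)) ((∑' k, w k : ℝ) : ℂ) :=
    Complex.hasSum_ofReal.mpr hw_sum.hasSum
  have h4 := (h3.mul_left ε).smul_const ξ
  have h5 : HasSum (fun k => (w k : ℂ) • Xi k ξ - (ε * (w k : ℂ)) • ξ)
      (A ξ - (ε * ((∑' k, w k : ℝ) : ℂ)) • ξ) := h2.sub h4
  refine (congrArg (fun f => HasSum f _) (funext fun k => ?_)).mp h5
  symm
  rw [smul_sub, smul_smul, mul_comm]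

theorem no_eigen (w : ℕ → ℝ) (hw_pos : ∀ k, 0 < w k) (hw_sum : Summable w)
    (Xi : ℕ → H →L[ℂ] H)
    (hXi : ∀ k σ, Xi k (Z σ) = Z (symmDiff σ {k}))
    (A : H →L[ℂ] H) (hA : A = ∑' k, (w k : ℂ) • Xi k) (ε : ℝ) (hε : ε * ε = 1) (ξ : H)
    (h : A ξ = ((ε : ℂ) * ((∑' k, w k : ℝ) : ℂ)) • ξ) : ξ = 0 := by
  have h1 := A_hasSum w hw_pos hw_sum Xi hXi A hA ε ξ
  rw [h, sub_self] at h1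
  have h2 := h1.mapL (innerSL ℂ (((ε : ℂ)) • ξ))
  have h3 := h2.mapL Complex.reCLM
  have key : ∀ k, Complex.reCLM (innerSL ℂ (((ε : ℂ)) • ξ) ((w k : ℂ) • (Xi k ξ - (ε : ℂ) • ξ)))
      = - (w k / 2 * ‖Xi k ξ - (ε : ℂ) • ξ‖ ^ 2) := by
    intro k
    have e1 := @norm_sub_sq ℂ H _ _ _ (Xi k ξ) ((ε : ℂ) • ξ)
    have e2 : ‖(ε : ℂ) • ξ‖ ^ 2 = ‖ξ‖ ^ 2 := by
      rw [norm_smul, mul_pow, Complex.norm_real, Real.norm_eq_abs, sq_abs, pow_two, hε, one_mul]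
    rw [Xi_norm _ k (hXi k), e2, inner_re_symm] at e1
    have e3 : Complex.reCLM (innerSL ℂ (((ε : ℂ)) • ξ) ((w k : ℂ) • (Xi k ξ - (ε : ℂ) • ξ)))
        = w k * (RCLike.re (inner ℂ ((ε : ℂ) • ξ) (Xi k ξ)) - ‖ξ‖ ^ 2) := by
      rw [← e2, innerSL_apply_apply, inner_smul_right, inner_sub_right, inner_self_eq_norm_sq_to_K,
        Complex.reCLM_apply, Complex.re_ofReal_mul, Complex.sub_re]
      congr 2
      norm_cast
    rw [e3, e1]; ring
  simp only [key, map_zero] at h3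
  have h5 := h3.neg
  simp only [neg_neg, neg_zero] at h5
  have h6 := (hasSum_zero_iff_of_nonneg (fun k => by have := hw_pos k; positivity)).mp h5
  have h7 : ∀ k, Xi k ξ = (ε : ℂ) • ξ := by
    intro k
    have := congrFun h6 k
    have hw := hw_pos k
    simp only [Pi.zero_apply, mul_eq_zero] at this
    rcases this with h | h
    · linarith
    · exact sub_eq_zero.mp (norm_eq_zero.mp (pow_eq_zero_iff (two_ne_zero) |>.mp h))
  ext τ
  have hp : 0 < (2 : ENNReal).toReal := by norm_num
  have hsum := (lp.memℓp ξ).summable hp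
  have hinj : Function.Injective (fun k : ℕ => symmDiff τ {k}) := by
    intro a b hab
    exact Finset.singleton_injective (symmDiff_right_injective τ hab)
  have ht := (hsum.comp_injective hinj).tendsto_atTop_zero
  have hεn : ‖(ε : ℂ)‖ = 1 := by
    rw [Complex.norm_real, Real.norm_eq_abs]
    have := abs_mul_abs_self ε
    rw [hε] at this
    nlinarith [abs_nonneg ε]
  have hc : ((fun i => ‖ξ i‖ ^ (2 : ENNReal).toReal) ∘ fun k : ℕ => symmDiff τ {k})
      = fun _ => ‖ξ τ‖ ^ (2 : ENNReal).toReal := by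
    funext k
    have := Xi_apply _ k (hXi k) ξ τ
    simp only [Function.comp]
    rw [← this, h7 k, lp.coeFn_smul, Pi.smul_apply, norm_smul, hεn, one_mul]
  rw [hc] at ht
  have := tendsto_nhds_unique tendsto_const_nhds ht
  simpa using this

theorem exists_vec (X : ℕ → H →L[ℂ] H) (hX : ∀ k σ, X k (Z σ) = Z (symmDiff σ {k}))
    (ε : ℝ) (hε : ε * ε = 1) (n : ℕ) :
    ∃ v : H, v ≠ 0 ∧ ∀ k < n, X k v = (ε : ℂ) • v := by
  have hε' : (ε : ℂ) * ε = 1 := by exact_mod_cast hε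
  let v : H := ∑ σ ∈ (Finset.range n).powerset, ((ε : ℂ) ^ σ.card) • Z σ
  have hv : ∀ τ, v τ = if τ ⊆ Finset.range n then (ε : ℂ) ^ τ.card else 0 := by
    intro τ
    simp only [v, lp.coeFn_sum, Finset.sum_apply, lp.coeFn_smul, Pi.smul_apply, Z_apply]
    simp
  refine ⟨v, ?_, ?_⟩
  · intro h
    have := hv ∅
    rw [h] at this
    simp at this
  · intro k hk
    ext τ
    rw [Xi_apply _ k (hX k), lp.coeFn_smul, Pi.smul_apply, hv, hv]
    by_cases hkτ : k ∈ τ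
    · have e : symmDiff τ {k} = τ.erase k := by
        ext x; simp only [Finset.mem_symmDiff, Finset.mem_singleton, Finset.mem_erase]
        grind
      have hs : τ.erase k ⊆ Finset.range n ↔ τ ⊆ Finset.range n := by
        simp only [Finset.subset_iff, Finset.mem_erase, Finset.mem_range]; grind
      rw [e]
      simp only [hs]
      split_ifs
      · rw [← Finset.card_erase_add_one hkτ, pow_succ, smul_eq_mul, mul_comm, mul_assoc, hε', mul_one]
      · simp
    · have e : symmDiff τ {k} = insert k τ := by
        ext x; simp only [Finset.mem_symmDiff, Finset.mem_singleton, Finset.mem_insert]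
        grind
      have hs : insert k τ ⊆ Finset.range n ↔ τ ⊆ Finset.range n := by
        simp only [Finset.subset_iff, Finset.mem_insert, Finset.mem_range]; grind
      rw [e]
      simp only [hs]
      split_ifs
      · rw [Finset.card_insert_of_notMem hkτ, pow_succ, smul_eq_mul, mul_comm]
      · simp

theorem in_spec (w : ℕ → ℝ) (hw_pos : ∀ k, 0 < w k) (hw_sum : Summable w)
    (Xi : ℕ → H →L[ℂ] H)
    (hXi : ∀ k σ, Xi k (Z σ) = Z (symmDiff σ {k}))
    (A : H →L[ℂ] H) (hA : A = ∑' k, (w k : ℂ) • Xi k) (ε : ℝ) (hε : ε * ε = 1) :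
    ((ε : ℂ) * ((∑' k, w k : ℝ) : ℂ)) ∈ spectrum ℂ A := by
  rw [spectrum.mem_iff]
  rintro ⟨u, hu⟩
  set B : H →L[ℂ] H := ↑u⁻¹ with hB
  have hBu : B * (u : H →L[ℂ] H) = 1 := u.inv_mul
  have htail : Tendsto (fun n => ‖B‖ * (2 * ∑' k, w (k + n))) atTop (𝓝 (‖B‖ * (2 * 0))) :=
    ((tendsto_sum_nat_add w).const_mul 2).const_mul _
  have hlt : ∀ᶠ n in atTop, ‖B‖ * (2 * ∑' k, w (k + n)) < 1 :=
    htail.eventually_lt_const (by simp)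
  obtain ⟨n, hn⟩ := hlt.exists
  obtain ⟨v, hv0, hv⟩ := exists_vec Xi hXi ε hε n
  have hvpos : 0 < ‖v‖ := norm_pos_iff.mpr hv0
  have hεn : ‖(ε : ℂ)‖ = 1 := by
    rw [Complex.norm_real, Real.norm_eq_abs]
    have := abs_mul_abs_self ε
    rw [hε] at this
    nlinarith [abs_nonneg ε]
  have h1 := A_hasSum w hw_pos hw_sum Xi hXi A hA ε v
  have hwn : Summable (fun k => w (k + n)) := (summable_nat_add_iff n).mpr hw_sum
  have h2 : ‖A v - ((ε : ℂ) * ((∑' k, w k : ℝ) : ℂ)) • v‖ ≤ (∑' k, w (k + n)) * (2 * ‖v‖) := by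
    rw [← h1.tsum_eq, ← h1.summable.sum_add_tsum_nat_add n, Finset.sum_eq_zero, zero_add]
    · refine tsum_of_norm_bounded (hwn.hasSum.mul_right (2 * ‖v‖)) (fun k => ?_)
      rw [norm_smul, Complex.norm_real, Real.norm_of_nonneg (hw_pos _).le]
      refine mul_le_mul_of_nonneg_left ?_ (hw_pos _).le
      refine (norm_sub_le _ _).trans ?_
      rw [Xi_norm _ _ (hXi _), norm_smul, hεn]
      linarith
    · intro k hk
      rw [hv k (Finset.mem_range.mp hk), sub_self, smul_zero]
  have h3 : (u : H →L[ℂ] H) v = -(A v - ((ε : ℂ) * ((∑' k, w k : ℝ) : ℂ)) • v) := by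
    rw [hu, neg_sub]
    rw [Algebra.algebraMap_eq_smul_one]
    rfl
  have h4 : B ((u : H →L[ℂ] H) v) = v := by
    have := congrArg (fun T : H →L[ℂ] H => T v) hBu
    exact this
  have h5 : ‖v‖ ≤ ‖B‖ * ((∑' k, w (k + n)) * (2 * ‖v‖)) := by
    calc ‖v‖ = ‖B ((u : H →L[ℂ] H) v)‖ := by rw [h4]
      _ ≤ ‖B‖ * ‖(u : H →L[ℂ] H) v‖ := B.le_opNorm _
      _ ≤ _ := by
        refine mul_le_mul_of_nonneg_left ?_ (norm_nonneg _)
        rw [h3, norm_neg]; exact h2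
  nlinarith

/-- Theorem 3.6: both `-|w|` and `|w|` belong to `spec(A_w)`, but neither is an
eigenvalue of `A_w`. -/
theorem endpoints_in_spectrum_not_eigenvalues
    (w : ℕ → ℝ) (hw_pos : ∀ k, 0 < w k) (hw_sum : Summable w)
    (Xi : ℕ → H →L[ℂ] H)
    (hXi : ∀ k σ, Xi k (Z σ) = Z (symmDiff σ {k}))
    (A : H →L[ℂ] H) (hA : A = ∑' k, (w k : ℂ) • Xi k) :
    (-((∑' k, w k : ℝ) : ℂ)) ∈ spectrum ℂ A ∧
    ((∑' k, w k : ℝ) : ℂ) ∈ spectrum ℂ A ∧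
    (∀ ξ : H, A ξ = ((∑' k, w k : ℝ) : ℂ) • ξ ∨
        A ξ = (-((∑' k, w k : ℝ) : ℂ)) • ξ → ξ = 0) := by
  have hp := in_spec w hw_pos hw_sum Xi hXi A hA 1 (by norm_num)
  have hm := in_spec w hw_pos hw_sum Xi hXi A hA (-1) (by norm_num)
  refine ⟨by simpa using hm, by simpa using hp, ?_⟩
  rintro ξ (h | h)
  · exact no_eigen w hw_pos hw_sum Xi hXi A hA 1 (by norm_num) ξ (by simpa using h)
  · exact no_eigen w hw_pos hw_sum Xi hXi A hA (-1) (by norm_num) ξ (by simpa using h)
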